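/- For every integer r ≥ 1, the sum over n from 2 to infinity of H_{n−1}·h_n^{(r)}/(n·C(n+r, r)) equals H_r·π²/6 + ζ(3). -/

import Mathlib

open Finset Real

noncomputable def H (n : ℕ) : ℝ := ∑ i ∈ Finset.range n, 1/((i:ℝ)+1)

noncomputable def H2 (n : ℕ) : ℝ := ∑ i ∈ Finset.range n, 1/((i:ℝ)+1)^2

noncomputable def H3 (n : ℕ) : ℝ := ∑ i ∈ Finset.range n, 1/((i:ℝ)+1)^3

noncomputable def hh (r n : ℕ) : ℝ := (Nat.choose (n+r-1) (r-1)) * (H (n+r-1) - H (r-1))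

noncomputable def zeta3 : ℝ := ∑' n : ℕ, 1/((n:ℝ)+1)^3

open Filter Topology

theorem H_succ (n : ℕ) : H (n + 1) = H n + 1 / ((n : ℝ) + 1) := by
  simp [H, Finset.sum_range_succ]

theorem H_zero : H 0 = 0 := by simp [H]

theorem H_mono : Monotone H := by
  refine monotone_nat_of_le_succ fun n => ?_
  rw [H_succ]
  have : 0 ≤ 1 / ((n : ℝ) + 1) := by positivity
  linarith

theorem H_nonneg (n : ℕ) : 0 ≤ H n := by
  rw [← H_zero]
  exact H_mono (Nat.zero_le n)

theorem H_eq_harmonic (n : ℕ) : H n = (harmonic n : ℝ) := by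
  simp [H, harmonic]

theorem H_le_one_add_log (n : ℕ) : H n ≤ 1 + Real.log n := by
  rw [H_eq_harmonic]
  exact harmonic_le_one_add_log n

theorem tendsto_one_add_log_sq_div :
    Tendsto (fun n : ℕ => (1 + Real.log n) ^ 2 / (n : ℝ)) atTop (𝓝 0) := by
  have h0 : Tendsto (fun x : ℝ => 1 / x) atTop (𝓝 0) := by
    simpa using tendsto_inv_atTop_zero (𝕜 := ℝ)
  have h1 : Tendsto (fun x : ℝ => Real.log x / x) atTop (𝓝 0) := by
    simpa using (Real.isLittleO_pow_log_id_atTop (n := 1)).tendsto_div_nhds_zero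
  have h2 : Tendsto (fun x : ℝ => Real.log x ^ 2 / x) atTop (𝓝 0) := by
    simpa using (Real.isLittleO_pow_log_id_atTop (n := 2)).tendsto_div_nhds_zero
  have h3 : Tendsto (fun x : ℝ => (1 + Real.log x) ^ 2 / x) atTop (𝓝 0) := by
    have h := (h0.add (h1.const_mul 2)).add h2
    simp only [mul_zero, add_zero] at h
    refine h.congr fun x => ?_
    ring
  exact h3.comp tendsto_natCast_atTop_atTop

theorem tendsto_H_sq_div : Tendsto (fun n : ℕ => H n ^ 2 / (n : ℝ)) atTop (𝓝 0) := by
  refine squeeze_zero (fun n => by positivity) (fun n => ?_) tendsto_one_add_log_sq_div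
  have h1 := H_nonneg n
  have h2 := H_le_one_add_log n
  gcongr

/-- Shifted harmonic numbers are `o(√n)`, in product form. -/
theorem tendsto_H_mul_H_div (a b c : ℕ) (hb : b ≤ c) (ha : a ≤ c) :
    Tendsto (fun n : ℕ => H (n + a) * H (n + b) / ((n : ℝ) + c)) atTop (𝓝 0) := by
  have h := tendsto_H_sq_div.comp (tendsto_add_atTop_nat c)
  refine squeeze_zero (fun n => ?_) (fun n => ?_) h
  · have := H_nonneg (n + a)
    have := H_nonneg (n + b)
    positivity
  · simp only [Function.comp, Nat.cast_add, sq]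
    have h1 := H_nonneg (n + a)
    have h2 := H_nonneg (n + b)
    have h3 : H (n + a) ≤ H (n + c) := H_mono (by omega)
    have h4 : H (n + b) ≤ H (n + c) := H_mono (by omega)
    have h5 := H_nonneg (n + c)
    gcongr

theorem tendsto_H_div (a c : ℕ) (ha : a ≤ c) (hc : 1 ≤ c) :
    Tendsto (fun n : ℕ => H (n + a) / ((n : ℝ) + c)) atTop (𝓝 0) := by
  refine squeeze_zero' (Eventually.of_forall fun n => ?_) ?_ (tendsto_H_mul_H_div a c c le_rfl ha)
  · have := H_nonneg (n + a)
    positivity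
  · filter_upwards with n
    have h1 := H_nonneg (n + a)
    have h2 : 1 ≤ H (n + c) := by
      have : H 1 ≤ H (n + c) := H_mono (by omega)
      simpa [H] using this
    gcongr
    nlinarith

theorem tendsto_const_div_add (x : ℝ) (c : ℕ) :
    Tendsto (fun n : ℕ => x / ((n : ℝ) + c)) atTop (𝓝 0) :=
  tendsto_const_nhds.div_atTop
    (tendsto_atTop_add_const_right _ _ tendsto_natCast_atTop_atTop)

/-- If `f = g + ΔG` with `G 0 = 0` and `G → 0`, then `f` and `g` have the same conditional sum. -/
theorem tendsto_sum_of_eq_add_telescope {f g G : ℕ → ℝ} {L : ℝ}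
    (hfg : ∀ n, f n = g n + (G (n + 1) - G n)) (h0 : G 0 = 0) (hG : Tendsto G atTop (𝓝 0))
    (hg : Tendsto (fun N => ∑ n ∈ range N, g n) atTop (𝓝 L)) :
    Tendsto (fun N => ∑ n ∈ range N, f n) atTop (𝓝 L) := by
  have h := hg.add hG
  rw [add_zero] at h
  refine h.congr fun N => ?_
  rw [Finset.sum_congr rfl fun n _ => hfg n, Finset.sum_add_distrib, Finset.sum_range_sub, h0,
    sub_zero]

theorem hasSum_one_div_succ_sq : HasSum (fun n : ℕ => 1 / ((n : ℝ) + 1) ^ 2) (Real.pi ^ 2 / 6) := by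
  have h := (hasSum_nat_add_iff' 1).mpr hasSum_zeta_two
  simpa using h

/-- The summand of `∑ (H_{m+k} - H_k)(1/m - 1/(m+k+1))`, indexed by `m = n + 1`. -/
noncomputable def linearTerm (k n : ℕ) : ℝ :=
  (H (n + k + 1) - H k) * ((k : ℝ) + 1) / (((n : ℝ) + 1) * ((n : ℝ) + k + 2))

theorem tendsto_sum_linearTerm (k : ℕ) :
    Tendsto (fun N => ∑ n ∈ range N, linearTerm k n) atTop (𝓝 (Real.pi ^ 2 / 6)) := by
  induction k with
  | zero =>
    refine tendsto_sum_of_eq_add_telescope (G := fun n => -(H n / ((n : ℝ) + 1)))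
      (fun n => ?_) (by simp [H_zero]) ?_ hasSum_one_div_succ_sq.tendsto_sum_nat
    · simp only [linearTerm, H_zero, H_succ, Nat.add_zero, Nat.cast_zero, Nat.cast_add,
        Nat.cast_one]
      field_simp
      ring
    · simpa using (tendsto_H_div 0 1 (by omega) le_rfl).neg
  | succ k ih =>
    refine tendsto_sum_of_eq_add_telescope
      (G := fun n => -((H (n + k + 1) - H (k + 1)) / ((n : ℝ) + k + 2)))
      (fun n => ?_) (by simp) ?_ ih
    · have e1 : n + (k + 1) + 1 = n + k + 1 + 1 := by ring
      have e2 : n + 1 + k + 1 = n + k + 1 + 1 := by ring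
      simp only [linearTerm, e1, e2, H_succ (n + k + 1), H_succ k]
      push_cast
      field_simp
      ring
    · have h := ((tendsto_H_div (k + 1) (k + 2) (by omega) (by omega)).sub
        (tendsto_const_div_add (H (k + 1)) (k + 2))).neg
      simp only [sub_zero, neg_zero] at h
      refine h.congr fun n => ?_
      push_cast
      rw [← add_assoc, ← add_assoc, sub_div]

theorem summable_H_succ_div_sq : Summable fun n : ℕ => H (n + 1) / ((n : ℝ) + 1) ^ 2 := by
  have hnn : ∀ n, 0 ≤ linearTerm 0 n := fun n => by
    have := H_nonneg (n + 1)
    simp only [linearTerm, H_zero, sub_zero, Nat.add_zero]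
    positivity
  have hs : Summable (linearTerm 0) :=
    ((hasSum_iff_tendsto_nat_of_nonneg hnn _).mpr (tendsto_sum_linearTerm 0)).summable
  refine Summable.of_nonneg_of_le (fun n => ?_) (fun n => ?_) (hs.mul_left 2)
  · have := H_nonneg (n + 1)
    positivity
  · have := H_nonneg (n + 1)
    simp only [linearTerm, H_zero, sub_zero, Nat.cast_zero, zero_add, mul_one,
      add_zero]
    rw [← mul_div_assoc, div_le_div_iff₀ (by positivity) (by positivity)]
    have hn : (0 : ℝ) ≤ n := Nat.cast_nonneg n
    have : ((n : ℝ) + 1) * (n + 2) ≤ 2 * (n + 1) ^ 2 := by nlinarith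
    nlinarith

theorem tendsto_H_add_sub_H (a : ℕ) :
    Tendsto (fun n : ℕ => H (n + a) - H n) atTop (𝓝 0) := by
  induction a with
  | zero => simp
  | succ a ih =>
    have h := ih.add (tendsto_const_div_add 1 (a + 1))
    rw [add_zero] at h
    refine h.congr fun n => ?_
    rw [← add_assoc, H_succ]
    push_cast
    ring

theorem hasSum_one_div_mul_add (n : ℕ) :
    HasSum (fun k : ℕ => 1 / (((n : ℝ) + 1) * ((k : ℝ) + 1) * ((n : ℝ) + k + 2)))
      (H (n + 1) / ((n : ℝ) + 1) ^ 2) := by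
  rw [hasSum_iff_tendsto_nat_of_nonneg (fun k => by positivity)]
  have h := (((tendsto_H_add_sub_H (n + 1)).const_sub (H (n + 1))).div_const (((n : ℝ) + 1) ^ 2))
  rw [sub_zero] at h
  refine h.congr fun K => ?_
  induction K with
  | zero => simp [H_zero]
  | succ K ih =>
    rw [Finset.sum_range_succ, ← ih, show K + 1 + (n + 1) = K + (n + 1) + 1 by ring,
      H_succ (K + (n + 1)), H_succ K]
    push_cast
    field_simp
    ring

theorem sum_antidiagonal_one_div (m : ℕ) :
    ∑ p ∈ antidiagonal m, 1 / (((p.1 : ℝ) + 1) * ((p.2 : ℝ) + 1) * ((p.1 : ℝ) + p.2 + 2))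
      = 2 * (H (m + 1) / ((m : ℝ) + 2) ^ 2) := by
  have h1 : ∑ p ∈ antidiagonal m, 1 / ((p.1 : ℝ) + 1) = H (m + 1) := by
    rw [Finset.Nat.sum_antidiagonal_eq_sum_range_succ_mk, H]
  have h2 : ∑ p ∈ antidiagonal m, 1 / ((p.2 : ℝ) + 1) = H (m + 1) := by
    rw [← h1, ← Finset.Nat.sum_antidiagonal_swap]
    simp
  have h3 : ∀ p ∈ antidiagonal m,
      1 / (((p.1 : ℝ) + 1) * ((p.2 : ℝ) + 1) * ((p.1 : ℝ) + p.2 + 2))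
        = (1 / ((p.1 : ℝ) + 1) + 1 / ((p.2 : ℝ) + 1)) / ((m : ℝ) + 2) ^ 2 := by
    intro p hp
    rw [HasAntidiagonal.mem_antidiagonal] at hp
    rw [← hp]
    push_cast
    field_simp
    ring
  rw [Finset.sum_congr rfl h3, ← Finset.sum_div, Finset.sum_add_distrib, h1, h2]
  ring

/-- Euler's identity `∑ H_m / (m+1)² = ζ(3)`. -/
theorem hasSum_H_succ_div_sq :
    HasSum (fun n : ℕ => H (n + 1) / ((n : ℝ) + 2) ^ 2) zeta3 := by
  let A : ℕ × ℕ → ℝ := fun p => 1 / (((p.1 : ℝ) + 1) * ((p.2 : ℝ) + 1) * ((p.1 : ℝ) + p.2 + 2))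
  have hA : Summable A := by
    rw [summable_prod_of_nonneg (fun p => by simp only [A, Pi.zero_apply]; positivity)]
    refine ⟨fun n => (hasSum_one_div_mul_add n).summable, ?_⟩
    simpa only [A, (hasSum_one_div_mul_add _).tsum_eq] using summable_H_succ_div_sq
  have hrow : HasSum (fun n : ℕ => H (n + 1) / ((n : ℝ) + 1) ^ 2) (∑' p, A p) :=
    hA.hasSum.prod_fiberwise hasSum_one_div_mul_add
  have hdiag : HasSum (fun m : ℕ => 2 * (H (m + 1) / ((m : ℝ) + 2) ^ 2)) (∑' p, A p) := by
    have h := (HasAntidiagonal.sigmaAntidiagonalEquivProd.hasSum_iff (f := A)).mpr hA.hasSum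
    refine h.sigma fun m => ?_
    rw [← sum_antidiagonal_one_div, ← Finset.sum_coe_sort]
    exact hasSum_fintype _
  have hhalf : HasSum (fun m : ℕ => H (m + 1) / ((m : ℝ) + 2) ^ 2) ((∑' p, A p) / 2) := by
    simpa using hdiag.div_const 2
  have hshift : HasSum (fun n : ℕ => H n / ((n : ℝ) + 1) ^ 2) ((∑' p, A p) / 2) := by
    refine (hasSum_nat_add_iff' 1).mp ?_
    simp only [Finset.sum_range_one, H_zero, zero_div, sub_zero]
    refine hhalf.congr_fun fun n => ?_
    push_cast
    ring
  have hzeta : HasSum (fun n : ℕ => 1 / ((n : ℝ) + 1) ^ 3) ((∑' p, A p) / 2) := by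
    have h := hrow.sub hshift
    rw [sub_half] at h
    refine h.congr_fun fun n => ?_
    rw [H_succ]
    field_simp
    ring
  rw [zeta3, hzeta.tsum_eq]
  exact hhalf

/-- The summand of the main series with `r = k + 1`, indexed by `n + 1`. -/
noncomputable def quadraticTerm (k n : ℕ) : ℝ := H n * linearTerm k n

theorem tendsto_sum_quadraticTerm (k : ℕ) :
    Tendsto (fun N => ∑ n ∈ range N, quadraticTerm k n) atTop
      (𝓝 (H (k + 1) * Real.pi ^ 2 / 6 + zeta3)) := by
  induction k with
  | zero =>
    have hg := (hasSum_H_succ_div_sq.add hasSum_one_div_succ_sq).tendsto_sum_nat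
    have hL : H (0 + 1) * Real.pi ^ 2 / 6 + zeta3 = zeta3 + Real.pi ^ 2 / 6 := by
      rw [H_succ, H_zero]
      simp
      ring
    rw [hL]
    refine tendsto_sum_of_eq_add_telescope
      (G := fun n => -(H n * H (n + 1) / ((n : ℝ) + 1) + H n / ((n : ℝ) + 1)))
      (fun n => ?_) (by simp [H_zero]) ?_ hg
    · simp only [quadraticTerm, linearTerm, H_zero, H_succ, Nat.add_zero, Nat.cast_zero,
        Nat.cast_add, Nat.cast_one]
      field_simp
      ring
    · simpa using ((tendsto_H_mul_H_div 0 1 1 le_rfl (by omega)).add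
        (tendsto_H_div 0 1 (by omega) le_rfl)).neg
  | succ k ih =>
    have hg := ih.add ((tendsto_sum_linearTerm (k + 1)).div_const ((k : ℝ) + 2))
    have hL : H (k + 1 + 1) * Real.pi ^ 2 / 6 + zeta3
        = H (k + 1) * Real.pi ^ 2 / 6 + zeta3 + Real.pi ^ 2 / 6 / ((k : ℝ) + 2) := by
      rw [H_succ (k + 1)]
      push_cast
      field_simp
      ring
    simp only [Finset.sum_div, ← Finset.sum_add_distrib] at hg
    rw [hL]
    refine tendsto_sum_of_eq_add_telescope
      (G := fun n => -(H n * (H (n + k + 1) - H (k + 1)) / ((n : ℝ) + k + 2)))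
      (fun n => ?_) (by simp) ?_ hg
    · have e1 : n + (k + 1) + 1 = n + k + 1 + 1 := by ring
      have e2 : n + 1 + k + 1 = n + k + 1 + 1 := by ring
      simp only [quadraticTerm, linearTerm, e1, e2, H_succ (n + k + 1), H_succ k, H_succ n]
      push_cast
      field_simp
      ring
    · have h := ((tendsto_H_mul_H_div 0 (k + 1) (k + 2) (by omega) (by omega)).sub
        ((tendsto_H_div 0 (k + 2) (by omega) (by omega)).mul_const (H (k + 1)))).neg
      simp only [zero_mul, sub_zero, neg_zero] at h
      refine h.congr fun n => ?_
      push_cast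
      rw [← add_assoc, ← add_assoc, Nat.add_zero]
      ring

theorem hasSum_quadraticTerm (k : ℕ) :
    HasSum (quadraticTerm k) (H (k + 1) * Real.pi ^ 2 / 6 + zeta3) := by
  refine (hasSum_iff_tendsto_nat_of_nonneg (fun n => ?_) _).mpr (tendsto_sum_quadraticTerm k)
  have h1 := H_nonneg n
  have h2 : 0 ≤ H (n + k + 1) - H k := sub_nonneg.mpr (H_mono (by omega))
  simp only [quadraticTerm, linearTerm]
  positivity

theorem summand_eq_quadraticTerm (k n : ℕ) :
    H (n + 1) * hh (k + 1) (n + 2) / (((n : ℝ) + 2) * (Nat.choose (n + 2 + (k + 1)) (k + 1) : ℝ))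
      = quadraticTerm k (n + 1) := by
  have hc : ((n : ℝ) + k + 3) * (Nat.choose (n + k + 2) k : ℝ)
      = (Nat.choose (n + k + 3) (k + 1) : ℝ) * ((k : ℝ) + 1) := by
    exact_mod_cast Nat.add_one_mul_choose_eq (n + k + 2) k
  have hpos : (0 : ℝ) < (Nat.choose (n + k + 3) (k + 1) : ℝ) := by
    exact_mod_cast Nat.choose_pos (by omega)
  have e1 : n + 2 + (k + 1) - 1 = n + k + 2 := by omega
  have e2 : n + 2 + (k + 1) = n + k + 3 := by ring
  have e3 : n + 1 + k + 1 = n + k + 2 := by ring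
  have hc' : (Nat.choose (n + k + 2) k : ℝ)
      = (Nat.choose (n + k + 3) (k + 1) : ℝ) * ((k : ℝ) + 1) / ((n : ℝ) + k + 3) := by
    rw [eq_div_iff (by positivity), ← hc]
    ring
  simp only [hh, quadraticTerm, linearTerm, e1, e3, Nat.add_sub_cancel, hc']
  rw [e2]
  push_cast
  have e4 : (n : ℝ) + 1 + k + 2 = n + k + 3 := by ring
  have e5 : (n : ℝ) + 1 + 1 = n + 2 := by ring
  rw [e4, e5]
  field_simp

theorem stmt14 (r : ℕ) (hr : 1 ≤ r) :
    ∑' n : ℕ, H (n+1) * hh r (n+2) / (((n:ℝ)+2) * (Nat.choose (n+2+r) r : ℝ))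
      = H r * Real.pi^2/6 + zeta3 := by
  obtain ⟨k, rfl⟩ := Nat.exists_eq_add_of_le' hr
  simp only [summand_eq_quadraticTerm]
  have h := (hasSum_nat_add_iff' 1).mpr (hasSum_quadraticTerm k)
  rw [Finset.sum_range_one, quadraticTerm, H_zero, zero_mul, sub_zero] at h
  exact h.tsum_eq
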